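/- arXiv:1910.08362 — 4 statements merged into one kernel-verified Lean document; each statement's English description precedes it below -/
import Mathlib

section
/- For every prime p, ∑_{d | p#} μ(d)/(2^d − 1) = ∑_{t ≥ 1, gcd(t, p#) = 1} 2^{-t}, where the left-hand sum is over all positive divisors d of p# and the right-hand sum is over all positive integers t coprime to p#. -/
open scoped BigOperators

/-!
Summing the geometric series over the positive multiples of `d` gives
`1 / (2 ^ d - 1) = ∑_{t ≥ 1, d ∣ t} 2 ^ (-t)` (`hasSum_multiples`). Weighting by `μ d` and adding
up the finitely many series for `d ∣ n`, the coefficient of `2 ^ (-t)` becomes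
`∑_{d ∣ n, d ∣ t} μ d = ∑_{d ∣ gcd (t, n)} μ d`, which is `1` if `gcd (t, n) = 1` and `0` otherwise
(`sum_moebius_common_divisors`). The theorem is the case `n = p#`.
-/

lemma hasSum_multiples {d : ℕ} (hd : d ≠ 0) :
    HasSum (fun t : ℕ => if 1 ≤ t ∧ d ∣ t then (1 / 2 : ℝ) ^ t else 0) (1 / (2 ^ d - 1)) := by
  have hinj : Function.Injective (fun k : ℕ => d * (k + 1)) := fun a b h => by
    simpa [hd] using h
  -- The positive multiples of `d` are parametrized by `k ↦ d * (k + 1)`.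
  refine (hinj.hasSum_iff ?_).mp ?_
  · intro t ht
    refine if_neg ?_
    rintro ⟨h1, k, rfl⟩
    refine ht ⟨k - 1, ?_⟩
    have hk : k ≠ 0 := by
      rintro rfl
      simp at h1
    simp only [Nat.sub_add_cancel (Nat.one_le_iff_ne_zero.mpr hk)]
  · have h2 : (1 : ℝ) < 2 ^ d := one_lt_pow₀ (by norm_num) hd
    have hr : (1 / 2 : ℝ) ^ d < 1 := pow_lt_one₀ (by norm_num) (by norm_num) hd
    have hg := (hasSum_geometric_of_lt_one (by positivity) hr).mul_left ((1 / 2 : ℝ) ^ d)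
    have h3 : (2 : ℝ) ^ d - 1 ≠ 0 := by linarith
    have hval : (1 / 2 : ℝ) ^ d * (1 - (1 / 2 : ℝ) ^ d)⁻¹ = 1 / (2 ^ d - 1) := by
      rw [one_div_pow]
      field_simp
    rw [hval] at hg
    refine (congrArg (HasSum · _) (funext fun k => ?_)).mpr hg
    have h1 : 1 ≤ d * (k + 1) := Nat.one_le_iff_ne_zero.mpr (by positivity)
    simp only [Function.comp_apply, if_pos (And.intro h1 (dvd_mul_right d (k + 1)))]
    rw [pow_mul, pow_succ']

lemma sum_moebius_common_divisors {n : ℕ} (hn : n ≠ 0) (t : ℕ) :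
    ∑ d ∈ n.divisors, (if d ∣ t then ArithmeticFunction.moebius d else 0)
      = if Nat.gcd t n = 1 then 1 else 0 := by
  have hset : n.divisors.filter (· ∣ t) = (Nat.gcd t n).divisors := by
    ext d
    simp only [Finset.mem_filter, Nat.mem_divisors, Nat.dvd_gcd_iff, ne_eq, Nat.gcd_eq_zero_iff]
    tauto
  rw [← Finset.sum_filter, hset, ← ArithmeticFunction.coe_mul_zeta_apply,
    ArithmeticFunction.moebius_mul_coe_zeta, ArithmeticFunction.one_apply]

/-- For every prime `p`,
`∑_{d ∣ p#} μ(d)/(2^d - 1) = ∑_{t ≥ 1, gcd(t, p#) = 1} 2^(-t)`,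
where `p# = primorial p` is the product of all primes `q ≤ p`. -/
theorem gandhi_moebius_sum (p : ℕ) (hp : p.Prime) :
    ∑ d ∈ (primorial p).divisors,
        ((ArithmeticFunction.moebius d : ℤ) : ℝ) / (2 ^ d - 1)
      = ∑' t : {t : ℕ // 1 ≤ t ∧ Nat.gcd t (primorial p) = 1},
          (2 : ℝ) ^ (-(t.val : ℤ)) := by
  have hn : primorial p ≠ 0 := (primorial_pos p).ne'
  generalize primorial p = n at hn ⊢
  have hsum := hasSum_sum (s := n.divisors) fun d hd =>
    (hasSum_multiples (Nat.pos_of_mem_divisors hd).ne').mul_left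
      ((ArithmeticFunction.moebius d : ℤ) : ℝ)
  simp only [mul_one_div] at hsum
  rw [← hsum.tsum_eq]
  -- Turn the sum over the subtype into a sum over `ℕ` of an indicator function.
  refine Eq.trans ?_ (tsum_subtype {t : ℕ | 1 ≤ t ∧ Nat.gcd t n = 1}
    (fun t : ℕ => (2 : ℝ) ^ (-(t : ℤ)))).symm
  refine tsum_congr fun t => ?_
  have hm := congrArg (Int.cast : ℤ → ℝ) (sum_moebius_common_divisors hn t)
  push_cast at hm
  by_cases ht : 1 ≤ t
  · have hfactor : ∀ d ∈ n.divisors, ((ArithmeticFunction.moebius d : ℤ) : ℝ) *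
        (if 1 ≤ t ∧ d ∣ t then (1 / 2 : ℝ) ^ t else 0)
        = (if d ∣ t then ((ArithmeticFunction.moebius d : ℤ) : ℝ) else 0) * (1 / 2 : ℝ) ^ t := by
      intro d _
      by_cases h : d ∣ t <;> simp [h, ht]
    rw [Finset.sum_congr rfl hfactor, ← Finset.sum_mul, hm]
    by_cases hg : Nat.gcd t n = 1 <;> simp [Set.indicator, ht, hg]
  · simp [Set.indicator, ht]
end

section
/- For every positive integer n, the prime p_{n+2} is the least natural number t > p_{n+1} satisfying gcd(t, p_n#) = 1. -/
/-!
Write `q = p_{n+1}` and `r = p_{n+2}`. The prime `r` exceeds `q` and differs from every prime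
dividing `p_n#`, so it lies in the set. For minimality, let `q < t < r` with `t` coprime to `p_n#`.
The least prime factor of `t` is a prime below `r`, hence one of `p_1, …, p_{n+1}`, and coprimality
leaves only `q`. So `t` is a multiple of `q` larger than `q`, giving `t ≥ 2q`; but `r ≤ 2q` by
Bertrand's postulate (`nth_prime_succ_le_two_mul`), a contradiction.
-/

open scoped BigOperators

/-- `nthPrime k` is the k-th prime with 1-based indexing: p₁ = 2, p₂ = 3, ... -/
noncomputable def nthPrime (k : ℕ) : ℕ := Nat.nth Nat.Prime (k - 1)

/-- `primorialN n` is `p_n# = p₁ ⬝ p₂ ⋯ p_n`, the product of the first `n` primes. -/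
noncomputable def primorialN (n : ℕ) : ℕ := ∏ i ∈ Finset.range n, Nat.nth Nat.Prime i

/-- `theta n = -1/2 + ∑_{d ∣ p_n#} μ(d)/(2^d - 1)`. -/
noncomputable def theta (n : ℕ) : ℝ :=
  -1/2 + ∑ d ∈ (primorialN n).divisors,
    ((ArithmeticFunction.moebius d : ℤ) : ℝ) / (2 ^ d - 1)

/-- Consecutive primes satisfy `p_{k+1} ≤ 2 p_k`: Bertrand's postulate, phrased for `Nat.nth`. -/
theorem nth_prime_succ_le_two_mul (k : ℕ) :
    Nat.nth Nat.Prime (k + 1) ≤ 2 * Nat.nth Nat.Prime k := by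
  obtain ⟨s, hs, hlt, hle⟩ :=
    Nat.exists_prime_lt_and_le_two_mul _ (Nat.prime_nth_prime k).ne_zero
  by_contra! h
  exact absurd (Nat.le_nth_of_lt_nth_succ (hle.trans_lt h) hs) (not_le.mpr hlt)

/-- For every positive integer `n`, the prime `p_{n+2}` is the least natural
number `t > p_{n+1}` with `gcd(t, p_n#) = 1`. -/
theorem second_next_prime_least_coprime (n : ℕ) (hn : 0 < n) :
    IsLeast {t : ℕ | nthPrime (n + 1) < t ∧ Nat.gcd t (primorialN n) = 1}
      (nthPrime (n + 2)) := by
  have hinf := Nat.infinite_setOfPred_prime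
  have hq : nthPrime (n + 1) = Nat.nth Nat.Prime n := rfl
  have hr : nthPrime (n + 2) = Nat.nth Nat.Prime (n + 1) := rfl
  rw [hq, hr]
  refine ⟨⟨Nat.nth_strictMono hinf n.lt_succ_self, ?_⟩, ?_⟩
  · refine Nat.Coprime.prod_right fun i hi => ?_
    rw [Nat.coprime_primes (Nat.prime_nth_prime _) (Nat.prime_nth_prime _)]
    have hi' := Finset.mem_range.mp hi
    exact fun h => absurd (Nat.nth_injective hinf h) (by omega)
  · rintro t ⟨hqt, hcop⟩
    by_contra! htr
    have hq2 := (Nat.prime_nth_prime n).two_le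
    have hmin : t.minFac.Prime := Nat.minFac_prime (by omega)
    have hle : t.minFac ≤ t := Nat.minFac_le (by omega)
    obtain ⟨j, -, hj⟩ := Nat.exists_lt_card_nth_eq hmin
    have hjn : j < n + 1 := (Nat.nth_strictMono hinf).lt_iff_lt.mp (by simpa [hj] using hle.trans_lt htr)
    have hnj : n ≤ j := by
      by_contra! hlt
      have hdvd : t.minFac ∣ primorialN n :=
        hj ▸ Finset.dvd_prod_of_mem _ (Finset.mem_range.mpr hlt)
      exact Nat.not_coprime_of_dvd_of_dvd hmin.one_lt t.minFac_dvd hdvd hcop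
    obtain rfl : j = n := by omega
    obtain ⟨m, hm⟩ : Nat.nth Nat.Prime j ∣ t := hj ▸ t.minFac_dvd
    have hB := nth_prime_succ_le_two_mul j
    have hm2 : m < 2 := by
      by_contra! h
      nlinarith
    interval_cases m <;> omega
end

section
/- For every positive integer n, the remainder r_n := ∑_{t > p_{n+1}, gcd(t, p_n#) = 1} 2^{-t}, summed over all integers t > p_{n+1} coprime to p_n#, satisfies r_n < 2^{-p_{n+1}-1} = 2^{-p_{n+1}}/2. -/
/-!
Put `p = p_{n+1}`, which is odd since `n > 0`. Every `t` in the index set is odd, because `2` divides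
`p_n#`, and so `t = p + 2 + 2k` with `k ≥ 0`. The sum is thus at most the geometric series
`∑_k 2^(-p-2) (1/4)^k = 2^(-p) / 3`, which is less than `2^(-p) / 2`.
-/

open scoped BigOperators

theorem two_dvd_primorialN {n : ℕ} (hn : 0 < n) : 2 ∣ primorialN n := by
  have h := Finset.dvd_prod_of_mem (Nat.nth Nat.Prime) (Finset.mem_range.mpr hn)
  rwa [Nat.nth_prime_zero_eq_two] at h

theorem odd_nthPrime_succ {n : ℕ} (hn : 0 < n) : Odd (nthPrime (n + 1)) := by
  have hp : (nthPrime (n + 1)).Prime := Nat.prime_nth_prime _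
  refine hp.odd_of_ne_two ?_
  have h : Nat.nth Nat.Prime 0 < Nat.nth Nat.Prime n :=
    Nat.nth_strictMono Nat.infinite_setOfPred_prime hn
  rw [Nat.nth_prime_zero_eq_two] at h
  exact Nat.ne_of_gt h

/-- For every positive integer `n`, the remainder
`r_n = ∑_{t > p_{n+1}, gcd(t, p_n#) = 1} 2^(-t)` satisfies
`r_n < 2^(-p_{n+1} - 1) = 2^(-p_{n+1}) / 2`. -/
theorem remainder_lt (n : ℕ) (hn : 0 < n) :
    (∑' t : {t : ℕ // nthPrime (n + 1) < t ∧ Nat.gcd t (primorialN n) = 1},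
        (2 : ℝ) ^ (-(t.val : ℤ)))
      < (2 : ℝ) ^ (-(nthPrime (n + 1) : ℤ) - 1) ∧
    (2 : ℝ) ^ (-(nthPrime (n + 1) : ℤ) - 1)
      = (2 : ℝ) ^ (-(nthPrime (n + 1) : ℤ)) / 2 := by
  have heq : (2 : ℝ) ^ (-(nthPrime (n + 1) : ℤ) - 1)
      = (2 : ℝ) ^ (-(nthPrime (n + 1) : ℤ)) / 2 := by
    rw [zpow_sub₀ two_ne_zero, zpow_one]
  refine ⟨?_, heq⟩
  rw [heq]
  have hp := odd_nthPrime_succ hn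
  have h2 := two_dvd_primorialN hn
  generalize nthPrime (n + 1) = p at hp ⊢
  have key : ∀ t : {t : ℕ // p < t ∧ Nat.gcd t (primorialN n) = 1},
      t.val = p + 2 + 2 * ((t.val - p - 2) / 2) := by
    rintro ⟨t, ht, hg⟩
    have ho : Odd t := by
      rw [← Nat.not_even_iff_odd, even_iff_two_dvd]
      intro h
      have := Nat.dvd_gcd h h2
      omega
    obtain ⟨a, rfl⟩ := ho
    obtain ⟨b, rfl⟩ := hp
    dsimp only
    omega
  have hgeo : HasSum (fun k : ℕ => (2 : ℝ) ^ (-(p : ℤ)) / 4 * (1 / 4) ^ k)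
      ((2 : ℝ) ^ (-(p : ℤ)) / 4 * (1 - 1 / 4)⁻¹) :=
    (hasSum_geometric_of_lt_one (by norm_num) (by norm_num)).mul_left _
  have hinj : Function.Injective
      (fun t : {t : ℕ // p < t ∧ Nat.gcd t (primorialN n) = 1} => (t.val - p - 2) / 2) := by
    intro s t hst
    have hs := key s
    have ht := key t
    dsimp only at hst
    apply Subtype.ext
    omega
  have hterm : ∀ t : {t : ℕ // p < t ∧ Nat.gcd t (primorialN n) = 1},
      (2 : ℝ) ^ (-(t.val : ℤ))
        = (2 : ℝ) ^ (-(p : ℤ)) / 4 * (1 / 4) ^ ((t.val - p - 2) / 2) := by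
    intro t
    have ht := key t
    generalize (t.val - p - 2) / 2 = k at ht ⊢
    rw [ht, zpow_neg, zpow_neg, zpow_natCast, zpow_natCast, pow_add, pow_add, pow_mul,
      one_div_pow]
    norm_num
    ring
  calc ∑' t : {t : ℕ // p < t ∧ Nat.gcd t (primorialN n) = 1}, (2 : ℝ) ^ (-(t.val : ℤ))
      = ∑' t : {t : ℕ // p < t ∧ Nat.gcd t (primorialN n) = 1},
          (2 : ℝ) ^ (-(p : ℤ)) / 4 * (1 / 4) ^ ((t.val - p - 2) / 2) := tsum_congr hterm
    _ ≤ ∑' k : ℕ, (2 : ℝ) ^ (-(p : ℤ)) / 4 * (1 / 4) ^ k :=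
        tsum_comp_le_tsum_of_inj hgeo.summable (fun k => by positivity) hinj
    _ = (2 : ℝ) ^ (-(p : ℤ)) / 3 := by rw [hgeo.tsum_eq]; ring
    _ < (2 : ℝ) ^ (-(p : ℤ)) / 2 := by
        have : (0 : ℝ) < (2 : ℝ) ^ (-(p : ℤ)) := by positivity
        linarith
end

section
/- For every positive integer n, p_{n+1} = ⌊1 − log₂(∑_{t ≥ p_{n+1}, gcd(t, p_n#) = 1} 2^{-t})⌋, where the sum is over all integers t ≥ p_{n+1} that are coprime to p_n# and ⌊·⌋ denotes the floor function. -/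
/-!
Write `q = p_{n+1}` and let `S` be the sum. The floor equals `q` exactly when
`2^(-q) < S ≤ 2^(1-q)`. The upper bound holds because `S` is a subsum of the geometric series
`∑_{t ≥ q} 2^(-t) = 2^(1-q)`. The lower bound holds because both `q` and `q^2` are coprime to
`p_n#`, so that `S ≥ 2^(-q) + 2^(-q^2) > 2^(-q)`.
-/

open scoped BigOperators

theorem coprime_nthPrime_primorialN (n : ℕ) :
    Nat.Coprime (nthPrime (n + 1)) (primorialN n) := by
  unfold nthPrime primorialN
  rw [Nat.add_sub_cancel]
  refine Nat.Coprime.prod_right fun i hi => ?_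
  rw [Nat.coprime_primes (Nat.prime_nth_prime n) (Nat.prime_nth_prime i)]
  exact (Nat.nth_strictMono Nat.infinite_setOfPred_prime (Finset.mem_range.mp hi)).ne'

theorem zpow_neg_eq_half_pow (t : ℕ) : (2 : ℝ) ^ (-(t : ℤ)) = (1 / 2) ^ t := by
  rw [zpow_neg, zpow_natCast, one_div, inv_pow]

/-- The sum lies in `(2^(-q), 2^(1-q)]`: all terms have exponent at least `q`, and both `q` and
some larger integer contribute. -/
theorem tsum_bounds (A : ℕ → Prop) (q r : ℕ) (hA : ∀ t, A t → q ≤ t) (hq : A q) (hr : A r)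
    (hqr : q < r) :
    (1 / 2 : ℝ) ^ q < ∑' t : {t : ℕ // A t}, (2 : ℝ) ^ (-(t.val : ℤ)) ∧
      ∑' t : {t : ℕ // A t}, (2 : ℝ) ^ (-(t.val : ℤ)) ≤ 2 * (1 / 2 : ℝ) ^ q := by
  simp_rw [zpow_neg_eq_half_pow]
  have hs : Summable fun t : {t : ℕ // A t} => (1 / 2 : ℝ) ^ t.val :=
    summable_geometric_two.comp_injective Subtype.val_injective
  constructor
  · have h := hs.sum_le_tsum {⟨q, hq⟩, ⟨r, hr⟩} (fun _ _ => by positivity)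
    rw [Finset.sum_pair (by simpa using hqr.ne)] at h
    have : (0 : ℝ) < (1 / 2) ^ r := by positivity
    linarith
  · -- Shifting the index by `q` embeds the sum into a full geometric series.
    have hg : HasSum (fun k : ℕ => (1 / 2 : ℝ) ^ k * (1 / 2) ^ q) (2 * (1 / 2) ^ q) :=
      hasSum_geometric_two.mul_right _
    rw [← hg.tsum_eq]
    refine hs.tsum_le_tsum_of_inj (fun t => t.val - q) ?_ (fun _ _ => by positivity) ?_
      hg.summable
    · intro a b hab
      have h1 := hA a.1 a.2
      have h2 := hA b.1 b.2
      exact Subtype.ext (by dsimp only at hab; omega)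
    · intro t
      rw [← pow_add, Nat.sub_add_cancel (hA t.1 t.2)]

/-- For every positive integer `n`,
`p_{n+1} = ⌊1 - log₂(∑_{t ≥ p_{n+1}, gcd(t, p_n#) = 1} 2^(-t))⌋`. -/
theorem gandhi_formula_sieve (n : ℕ) (hn : 0 < n) :
    (nthPrime (n + 1) : ℤ)
      = ⌊1 - Real.logb 2
          (∑' t : {t : ℕ // nthPrime (n + 1) ≤ t ∧ Nat.gcd t (primorialN n) = 1},
            (2 : ℝ) ^ (-(t.val : ℤ)))⌋ := by
  have hc := coprime_nthPrime_primorialN n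
  have hq : 1 < nthPrime (n + 1) := (Nat.prime_nth_prime n).one_lt
  set q := nthPrime (n + 1)
  have hlt : q < q ^ 2 := by nlinarith
  obtain ⟨h1, h2⟩ := tsum_bounds (fun t => q ≤ t ∧ Nat.gcd t (primorialN n) = 1) q (q ^ 2)
    (fun t ht => ht.1) ⟨le_rfl, hc⟩ ⟨hlt.le, hc.pow_left 2⟩ hlt
  set S := ∑' t : {t : ℕ // q ≤ t ∧ Nat.gcd t (primorialN n) = 1}, (2 : ℝ) ^ (-(t.val : ℤ))
  have hpos : (0 : ℝ) < (1 / 2) ^ q := by positivity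
  have hlog : Real.logb 2 ((1 / 2 : ℝ) ^ q) = -q := by
    rw [Real.logb_pow, one_div, Real.logb_inv, Real.logb_self_eq_one one_lt_two]
    ring
  have l1 := Real.logb_lt_logb one_lt_two hpos h1
  have l2 := Real.logb_le_logb_of_le one_lt_two (hpos.trans h1) h2
  rw [Real.logb_mul two_ne_zero hpos.ne', Real.logb_self_eq_one one_lt_two, hlog] at l2
  rw [hlog] at l1
  rw [eq_comm, Int.floor_eq_iff]
  push_cast
  constructor <;> linarith
end
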